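/- Let l₁ ≥ 2 be a square-free integer, D a nonzero integer, and T, Λ ≥ 2 real numbers. Suppose all solutions (t, m) ∈ ℤ_{>0} × ℤ_{>0} of t² − 4·l₁·m² = D with t ≤ T and m ≤ Λ are considered. Writing each solution as the algebraic number (t + 2m√l₁)/2 in the real quadratic field ℚ(√l₁), any two solutions with the same value of D differ multiplicatively by a unit of ℤ[√l₁]·(powers of the fundamental unit); since the fundamental unit ε of ℚ(√l₁) satisfies ε ≥ (1+√5)/2, the number of solutions (t,m) with √D-norm fixed and t + 2m√l₁ ≤ 4TΛ is at most C·log(TΛ)·d(|D|) for an absolute constant C. -/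

import Mathlib

/-- For two solutions of `t² - k m² = D`, either the trace of their quotient is `p`-integral, or
`k` has a square root in `ℤ_[p]`. -/
theorem padic_trace_le_or_isSquare (p : ℕ) [Fact p.Prime] {k D : ℤ} {x y : ℤ × ℤ}
    (hx : x.1 ^ 2 - k * x.2 ^ 2 = D) (hy : y.1 ^ 2 - k * y.2 ^ 2 = D) :
    ‖((2 * (x.1 * y.1 - k * x.2 * y.2) : ℤ) : ℤ_[p])‖ ≤ ‖(D : ℤ_[p])‖ ∨
      ∃ r : ℤ_[p], r ^ 2 = k := by
  obtain ⟨a, b⟩ := x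
  obtain ⟨c, d⟩ := y
  simp only at hx hy ⊢
  set A := a * c - k * b * d with hA
  set B := a * d - b * c with hB
  have hAB : A ^ 2 - k * B ^ 2 = D ^ 2 := by
    rw [hA, hB]
    linear_combination hx * (c ^ 2 - k * d ^ 2) + D * hy
  by_contra! h
  obtain ⟨hlt, hsq⟩ := h
  have hB0 : B ≠ 0 := by
    intro h0
    have hAD : A ^ 2 = D ^ 2 := by rw [← hAB, h0]; ring
    have hn : ‖(A : ℤ_[p])‖ ≤ ‖(D : ℤ_[p])‖ := by
      rcases sq_eq_sq_iff_eq_or_eq_neg.mp hAD with h | h <;> simp [h]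
    push_cast at hlt
    rw [norm_mul] at hlt
    have h2 : ‖(2 : ℤ_[p])‖ ≤ 1 := PadicInt.norm_le_one _
    nlinarith [norm_nonneg (A : ℤ_[p])]
  have h20 : (0 : ℝ) < ‖(2 : ℤ_[p])‖ := norm_pos_iff.mpr two_ne_zero
  obtain ⟨z, hz, -⟩ := hensels_lemma
    (F := (Polynomial.X ^ 2 - Polynomial.C ((4 * k * B ^ 2 : ℤ) : ℤ_[p]) : Polynomial ℤ_[p]))
    (a := ((2 * A : ℤ) : ℤ_[p])) (by
      have e1 : ((2 * A : ℤ) : ℤ_[p]) ^ 2 - ((4 * k * B ^ 2 : ℤ) : ℤ_[p])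
          = 2 ^ 2 * (D : ℤ_[p]) ^ 2 := by
        have := congrArg (Int.cast : ℤ → ℤ_[p]) hAB
        push_cast at this ⊢
        linear_combination 4 * this
      have e2 : ‖(D : ℤ_[p])‖ ^ 2 < ‖((2 * A : ℤ) : ℤ_[p])‖ ^ 2 := by gcongr
      simp only [map_sub, map_pow, Polynomial.aeval_X, Polynomial.aeval_C,
        Polynomial.derivative_X_pow, Polynomial.derivative_C, Algebra.algebraMap_self,
        RingHom.id_apply, sub_zero, e1, map_mul, Nat.cast_ofNat, Nat.add_one_sub_one,
        pow_one, norm_mul, norm_pow, mul_pow]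
      gcongr)
  have hz2 : z ^ 2 = ((4 * k * B ^ 2 : ℤ) : ℤ_[p]) := by
    simpa [sub_eq_zero] using hz
  have hBp : ((2 * B : ℤ) : ℚ_[p]) ≠ 0 := by exact_mod_cast mul_ne_zero two_ne_zero hB0
  have hw : ((z : ℚ_[p]) / ((2 * B : ℤ) : ℚ_[p])) ^ 2 = (k : ℚ_[p]) := by
    have := congrArg (PadicInt.Coe.ringHom (p := p)) hz2
    simp only [map_pow, map_intCast] at this
    change (z : ℚ_[p]) ^ 2 = _ at this
    rw [div_pow, this, div_eq_iff (pow_ne_zero 2 hBp)]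
    push_cast
    ring
  have hw1 : ‖(z : ℚ_[p]) / ((2 * B : ℤ) : ℚ_[p])‖ ≤ 1 := by
    rw [← sq_le_one_iff₀ (norm_nonneg _), ← norm_pow, hw]
    exact Padic.norm_int_le_one k
  refine hsq ⟨_, hw1⟩ ?_
  apply Subtype.coe_injective
  exact hw

/-- A `p`-adic invariant taking at most `v_p(D) + 1` values on the solutions of `t² - k m² = D`,
such that the quotient of two solutions with the same invariant has `p`-integral trace. -/
theorem exists_padic_invariant (p : ℕ) [hp : Fact p.Prime] (k : ℤ) {D : ℤ} (hD : D ≠ 0) :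
    ∃ f : ℤ × ℤ → ℕ, ∀ x : ℤ × ℤ, x.1 ^ 2 - k * x.2 ^ 2 = D →
      f x ≤ D.natAbs.factorization p ∧
      ∀ y : ℤ × ℤ, y.1 ^ 2 - k * y.2 ^ 2 = D → f x = f y →
        ∀ n : ℕ, ((p : ℤ) ^ n) ∣ D → ((p : ℤ) ^ n) ∣ 2 * (x.1 * y.1 - k * x.2 * y.2) := by
  have of_norm_le {u : ℤ} (h : ‖(u : ℤ_[p])‖ ≤ ‖(D : ℤ_[p])‖) (n : ℕ) (hn : ((p : ℤ) ^ n) ∣ D) :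
      ((p : ℤ) ^ n) ∣ u :=
    PadicInt.norm_int_le_pow_iff_dvd.mp (h.trans (PadicInt.norm_int_le_pow_iff_dvd.mpr hn))
  by_cases hr : ∃ r : ℤ_[p], r ^ 2 = k
  · obtain ⟨r, hr⟩ := hr
    have hD' : (D : ℤ_[p]) ≠ 0 := by exact_mod_cast hD
    have fac {x : ℤ × ℤ} (hx : x.1 ^ 2 - k * x.2 ^ 2 = D) :
        (x.1 - r * x.2 : ℤ_[p]) * (x.1 + r * x.2) = D := by
      have := congrArg (Int.cast : ℤ → ℤ_[p]) hx
      push_cast at this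
      linear_combination this - (x.2 : ℤ_[p]) ^ 2 * hr
    have ne {x : ℤ × ℤ} (hx : x.1 ^ 2 - k * x.2 ^ 2 = D) : (x.1 - r * x.2 : ℤ_[p]) ≠ 0 :=
      left_ne_zero_of_mul ((fac hx).symm ▸ hD')
    refine ⟨fun x => (x.1 - r * x.2 : ℤ_[p]).valuation, fun x hx => ⟨?_, fun y hy hxy => ?_⟩⟩
    · rw [← hp.out.pow_dvd_iff_le_factorization (Int.natAbs_ne_zero.mpr hD), ← Int.natCast_dvd]
      push_cast
      rw [← PadicInt.norm_int_le_pow_iff_dvd, ← PadicInt.norm_eq_zpow_neg_valuation (ne hx),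
        ← fac hx, norm_mul]
      exact mul_le_of_le_one_right (norm_nonneg _) (PadicInt.norm_le_one _)
    · apply of_norm_le
      have hxy' : ‖(x.1 - r * x.2 : ℤ_[p])‖ = ‖(y.1 - r * y.2 : ℤ_[p])‖ := by
        rw [PadicInt.norm_eq_zpow_neg_valuation (ne hx), PadicInt.norm_eq_zpow_neg_valuation (ne hy)]
        simp only at hxy
        rw [hxy]
      have e : ((2 * (x.1 * y.1 - k * x.2 * y.2) : ℤ) : ℤ_[p]) =
          (x.1 - r * x.2) * (y.1 + r * y.2) + (y.1 - r * y.2) * (x.1 + r * x.2) := by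
        push_cast
        linear_combination 2 * (x.2 : ℤ_[p]) * y.2 * hr
      rw [e]
      refine (PadicInt.nonarchimedean _ _).trans (max_le (le_of_eq ?_) (le_of_eq ?_))
      · rw [norm_mul, hxy', ← norm_mul, fac hy]
      · rw [norm_mul, ← hxy', ← norm_mul, fac hx]
  · exact ⟨0, fun x hx => ⟨Nat.zero_le _, fun y hy _ =>
      of_norm_le ((padic_trace_le_or_isSquare p hx hy).resolve_right hr)⟩⟩

/-- Two solutions of `t² - k m² = D` whose quotient has integral trace and is larger than `1`
differ by a factor of at least `2`. -/
theorem two_mul_le_of_dvd_trace {k D : ℤ} (hD : D ≠ 0) {q : ℝ} (hq : 0 < q) (hqk : q ^ 2 = k)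
    {x y : ℤ × ℤ} (hx : x.1 ^ 2 - k * x.2 ^ 2 = D) (hy : y.1 ^ 2 - k * y.2 ^ 2 = D)
    (hx1 : 0 < x.1) (hx2 : 0 < x.2) (hy1 : 0 < y.1) (hy2 : 0 < y.2)
    (hdvd : D ∣ 2 * (x.1 * y.1 - k * x.2 * y.2)) (hlt : (y.1 + q * y.2 : ℝ) < x.1 + q * x.2) :
    2 * (y.1 + q * y.2 : ℝ) ≤ x.1 + q * x.2 := by
  obtain ⟨a, b⟩ := x
  obtain ⟨c, d⟩ := y
  obtain ⟨e, he⟩ := hdvd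
  simp only at *
  have hxR : (a : ℝ) ^ 2 - k * b ^ 2 = D := by exact_mod_cast hx
  have hyR : (c : ℝ) ^ 2 - k * d ^ 2 = D := by exact_mod_cast hy
  have heR : 2 * ((a : ℝ) * c - k * b * d) = D * e := by exact_mod_cast he
  have hDR : (D : ℝ) ≠ 0 := by exact_mod_cast hD
  have hX : (0 : ℝ) < a + q * b := by
    have : (0 : ℝ) < a := by exact_mod_cast hx1
    have : (0 : ℝ) < b := by exact_mod_cast hx2
    positivity
  have hY : (0 : ℝ) < c + q * d := by
    have : (0 : ℝ) < c := by exact_mod_cast hy1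
    have : (0 : ℝ) < d := by exact_mod_cast hy2
    positivity
  rw [← hqk] at hxR hyR heR
  have key : (a + q * b : ℝ) ^ 2 + (c + q * d) ^ 2 = e * ((a + q * b) * (c + q * d)) := by
    apply mul_left_cancel₀ hDR
    linear_combination (a + q * b) * (c + q * d) * heR - (a + q * b) ^ 2 * hyR
      - (c + q * d) ^ 2 * hxR
  generalize (a + q * b : ℝ) = X at *
  generalize (c + q * d : ℝ) = Y at *
  have hXY := mul_pos hX hY
  have he3 : (3 : ℤ) ≤ e := by
    by_contra! h
    have : (e : ℝ) ≤ 2 := by exact_mod_cast Int.lt_add_one_iff.mp h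
    nlinarith [mul_pos (sub_pos.mpr hlt) (sub_pos.mpr hlt)]
  have he3R : (3 : ℝ) ≤ e := by exact_mod_cast he3
  by_contra! h
  nlinarith [mul_le_mul_of_nonneg_right he3R hXY.le, mul_pos (sub_pos.mpr hlt) (sub_pos.mpr h)]

theorem eq_of_add_mul_eq {k D : ℤ} {q : ℝ} (hq : 0 < q) (hqk : q ^ 2 = k)
    {x y : ℤ × ℤ} (hx : x.1 ^ 2 - k * x.2 ^ 2 = D) (hy : y.1 ^ 2 - k * y.2 ^ 2 = D)
    (hx1 : 0 < x.1) (hx2 : 0 < x.2) (h : (x.1 + q * x.2 : ℝ) = y.1 + q * y.2) : x = y := by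
  obtain ⟨a, b⟩ := x
  obtain ⟨c, d⟩ := y
  simp only at *
  have hxR : (a : ℝ) ^ 2 - q ^ 2 * b ^ 2 = D := by rw [hqk]; exact_mod_cast hx
  have hyR : (c : ℝ) ^ 2 - q ^ 2 * d ^ 2 = D := by rw [hqk]; exact_mod_cast hy
  have hX : (0 : ℝ) < a + q * b := by
    have : (0 : ℝ) < a := by exact_mod_cast hx1
    have : (0 : ℝ) < b := by exact_mod_cast hx2
    positivity
  have hconj : (a - q * b : ℝ) = c - q * d := by
    apply mul_left_cancel₀ hX.ne'
    linear_combination hxR - hyR - (c - q * d) * h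
  have hac : (a : ℝ) = c := by linarith
  have hbd : (b : ℝ) = d := mul_left_cancel₀ hq.ne' (by linarith)
  exact Prod.ext (by exact_mod_cast hac) (by exact_mod_cast hbd)

/-- A family of solutions in a box whose pairwise quotients have integral trace is
logarithmically small. -/
theorem card_le_of_pairwise_dvd_trace {k D : ℤ} (hk : 0 < k) (hD : D ≠ 0) {T M : ℝ}
    (hT : 2 ≤ T) (hM : 2 ≤ M) (S : Finset (ℤ × ℤ))
    (hS : ∀ x ∈ S, 0 < x.1 ∧ 0 < x.2 ∧ x.1 ^ 2 - k * x.2 ^ 2 = D ∧ (x.1 : ℝ) ≤ T ∧ (x.2 : ℝ) ≤ M)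
    (hdvd : ∀ x ∈ S, ∀ y ∈ S, D ∣ 2 * (x.1 * y.1 - k * x.2 * y.2)) :
    S.card ≤ ⌊Real.logb 2 (T * M)⌋₊ + 1 := by
  set q := √(k : ℝ)
  have hkR : (0 : ℝ) < k := by exact_mod_cast hk
  have hq : 0 < q := Real.sqrt_pos.mpr hkR
  have hqk : q ^ 2 = k := Real.sq_sqrt hkR.le
  have hq1 : 0 < 1 + q := by positivity
  have one_le : ∀ x ∈ S, 1 ≤ (x.1 + q * x.2 : ℝ) / (1 + q) := by
    intro x hx
    obtain ⟨h1, h2, -⟩ := hS x hx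
    have h1 : (1 : ℝ) ≤ x.1 := by exact_mod_cast h1
    have h2 : (1 : ℝ) ≤ x.2 := by exact_mod_cast h2
    rw [le_div_iff₀ hq1]
    nlinarith
  rw [← Finset.card_range (⌊Real.logb 2 (T * M)⌋₊ + 1)]
  refine Finset.card_le_card_of_injOn
    (fun x => ⌊Real.logb 2 ((x.1 + q * x.2 : ℝ) / (1 + q))⌋₊) (fun x hx => ?_) ?_
  · obtain ⟨h1, h2, -, h3, h4⟩ := hS x hx
    simp only [Finset.coe_range, Set.mem_Iio, Nat.lt_succ_iff]
    apply Nat.floor_le_floor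
    apply Real.logb_le_logb_of_le one_lt_two (by linarith [one_le x hx])
    rw [div_le_iff₀ hq1]
    nlinarith [mul_le_mul_of_nonneg_left h4 hq.le, mul_nonneg hq.le (by linarith : 0 ≤ M)]
  · have key : ∀ x ∈ S, ∀ y ∈ S, ⌊Real.logb 2 ((x.1 + q * x.2 : ℝ) / (1 + q))⌋₊ =
        ⌊Real.logb 2 ((y.1 + q * y.2 : ℝ) / (1 + q))⌋₊ →
        (x.1 + q * x.2 : ℝ) ≤ y.1 + q * y.2 := by
      intro x hx y hy hxy
      by_contra! hlt
      obtain ⟨hx1, hx2, hxD, -⟩ := hS x hx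
      obtain ⟨hy1, hy2, hyD, -⟩ := hS y hy
      have h2 := two_mul_le_of_dvd_trace hD hq hqk hxD hyD hx1 hx2 hy1 hy2 (hdvd x hx y hy) hlt
      have hy0 : (y.1 + q * y.2 : ℝ) / (1 + q) ≠ 0 := by linarith [one_le y hy]
      have hlog : Real.logb 2 ((y.1 + q * y.2 : ℝ) / (1 + q)) + 1 ≤
          Real.logb 2 ((x.1 + q * x.2 : ℝ) / (1 + q)) := by
        have hmul := Real.logb_mul (b := 2) hy0 two_ne_zero
        rw [Real.logb_self_eq_one one_lt_two] at hmul
        rw [← hmul]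
        apply Real.logb_le_logb_of_le one_lt_two (by linarith [one_le y hy])
        rw [div_mul_eq_mul_div]
        gcongr
        linarith
      have := Nat.floor_le_floor hlog
      rw [Nat.floor_add_one (Real.logb_nonneg one_lt_two (one_le y hy))] at this
      omega
    intro x hx y hy hxy
    exact eq_of_add_mul_eq hq hqk (hS x hx).2.2.1 (hS y hy).2.2.1 (hS x hx).1 (hS x hx).2.1
      (le_antisymm (key x hx y hy hxy) (key y hy x hx hxy.symm))

/-- The solutions of `t² - k m² = D` are covered by `d(|D|)` classes within which all quotients
have integral trace. -/
theorem exists_invariant_into_card_divisors (k : ℤ) {D : ℤ} (hD : D ≠ 0) :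
    ∃ (β : Type) (_ : DecidableEq β) (R : Finset β) (F : ℤ × ℤ → β),
      R.card = D.natAbs.divisors.card ∧
      ∀ x : ℤ × ℤ, x.1 ^ 2 - k * x.2 ^ 2 = D → F x ∈ R ∧
        ∀ y : ℤ × ℤ, y.1 ^ 2 - k * y.2 ^ 2 = D → F x = F y →
          D ∣ 2 * (x.1 * y.1 - k * x.2 * y.2) := by
  classical
  have hD' : D.natAbs ≠ 0 := Int.natAbs_ne_zero.mpr hD
  choose f hf using fun (p : ℕ) (hp : p.Prime) =>
    haveI := Fact.mk hp
    exists_padic_invariant p k hD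
  refine ⟨_, inferInstance,
    D.natAbs.primeFactors.pi fun p => Finset.range (D.natAbs.factorization p + 1),
    fun x p hp => f p (Nat.prime_of_mem_primeFactors hp) x, ?_, fun x hx => ⟨?_, fun y hy hxy => ?_⟩⟩
  · simp [Finset.card_pi, Nat.card_divisors hD']
  · simp only [Finset.mem_pi, Finset.mem_range, Nat.lt_succ_iff]
    exact fun p hp => (hf p _ x hx).1
  · rw [← Int.natAbs_dvd_natAbs, Nat.dvd_iff_prime_pow_dvd_dvd]
    intro p n hp hn
    rcases Nat.eq_zero_or_pos n with rfl | hn0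
    · simp
    have hmem : p ∈ D.natAbs.primeFactors :=
      Nat.mem_primeFactors.mpr ⟨hp, (dvd_pow_self p hn0.ne').trans hn, hD'⟩
    have := (hf p hp x hx).2 y hy (congrFun (congrFun hxy p) hmem) n
      (by exact_mod_cast Int.natCast_dvd.mpr hn)
    exact Int.natCast_dvd.mp (by exact_mod_cast this)


theorem pell_solution_count :
    ∃ C : ℝ, 0 < C ∧
      ∀ (l₁ : ℤ) (D : ℤ) (T Λ : ℝ),
        2 ≤ l₁ → Squarefree l₁ → D ≠ 0 → 2 ≤ T → 2 ≤ Λ →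
        ({p : ℤ × ℤ | 0 < p.1 ∧ 0 < p.2 ∧ p.1 ^ 2 - 4 * l₁ * p.2 ^ 2 = D ∧
            (p.1 : ℝ) ≤ T ∧ (p.2 : ℝ) ≤ Λ}).Finite ∧
        (({p : ℤ × ℤ | 0 < p.1 ∧ 0 < p.2 ∧ p.1 ^ 2 - 4 * l₁ * p.2 ^ 2 = D ∧
            (p.1 : ℝ) ≤ T ∧ (p.2 : ℝ) ≤ Λ}).ncard : ℝ)
          ≤ C * Real.log (T * Λ) * (Nat.divisors D.natAbs).card := by
  have hlog2 : 0 < Real.log 2 := Real.log_pos one_lt_two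
  refine ⟨2 / Real.log 2, by positivity, fun l₁ D T Λ hl _ hD hT hΛ => ?_⟩
  have hfin : ({p : ℤ × ℤ | 0 < p.1 ∧ 0 < p.2 ∧ p.1 ^ 2 - 4 * l₁ * p.2 ^ 2 = D ∧
      (p.1 : ℝ) ≤ T ∧ (p.2 : ℝ) ≤ Λ}).Finite :=
    (Set.finite_Icc ((0, 0) : ℤ × ℤ) (⌊T⌋, ⌊Λ⌋)).subset fun p ⟨h1, h2, _, h3, h4⟩ =>
      ⟨⟨h1.le, h2.le⟩, ⟨Int.le_floor.mpr h3, Int.le_floor.mpr h4⟩⟩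
  refine ⟨hfin, ?_⟩
  rw [Set.ncard_eq_toFinset_card _ hfin]
  have hS : ∀ x ∈ hfin.toFinset, 0 < x.1 ∧ 0 < x.2 ∧ x.1 ^ 2 - 4 * l₁ * x.2 ^ 2 = D ∧
      (x.1 : ℝ) ≤ T ∧ (x.2 : ℝ) ≤ Λ := fun x hx => hfin.mem_toFinset.mp hx
  generalize hfin.toFinset = S at hS
  obtain ⟨β, _, R, F, hR, hF⟩ := exists_invariant_into_card_divisors (4 * l₁) hD
  have hcard := Finset.card_le_mul_card_image_of_maps_to (f := F) (s := S) (t := R)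
    (fun x hx => (hF x (hS x hx).2.2.1).1) (⌊Real.logb 2 (T * Λ)⌋₊ + 1) (fun b _ => by
      refine card_le_of_pairwise_dvd_trace (by linarith : 0 < 4 * l₁) hD hT hΛ _
        (fun x hx => hS x (Finset.mem_filter.mp hx).1) fun x hx y hy => ?_
      obtain ⟨hx, hxb⟩ := Finset.mem_filter.mp hx
      obtain ⟨hy, hyb⟩ := Finset.mem_filter.mp hy
      exact (hF x (hS x hx).2.2.1).2 y (hS y hy).2.2.1 (hxb.trans hyb.symm))
  have hlogb : 1 ≤ Real.logb 2 (T * Λ) := by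
    rw [Real.le_logb_iff_rpow_le one_lt_two (by positivity), Real.rpow_one]
    nlinarith
  have hfloor := Nat.floor_le (zero_le_one.trans hlogb)
  rw [hR] at hcard
  calc (S.card : ℝ) ≤ (⌊Real.logb 2 (T * Λ)⌋₊ + 1) * D.natAbs.divisors.card := by
        exact_mod_cast hcard
    _ ≤ (2 * Real.logb 2 (T * Λ)) * D.natAbs.divisors.card := by
        gcongr
        linarith
    _ = 2 / Real.log 2 * Real.log (T * Λ) * D.natAbs.divisors.card := by
        rw [Real.logb]
        ring
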